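/- A finite lattice A is sharply transferable if and only if A satisfies the three conditions (T∨), (T∧), and Whitman's condition (W). -/

import Mathlib

/-!
Sufficiency. Condition (T) is equivalent to a rank on `A` which strictly increases from `p` to the
members of `I` for every minimal pair `(p, I)`. Given an embedding `φ` of `A` into the ideals of
`L`, choose elements of the `φ a` lying in no smaller `φ b`, enlarge them repeatedly so that each
stage covers the previous one across all minimal pairs, and take at `p` the stage given by the
rank. This gives a join-homomorphism `e : A → L` with `e a ∈ φ b ↔ a ≤ b`
(`exists_sharp_joinHom`). Let `R` be the sublattice of `A × L` generated by the graph of `e`. By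
(T) for meets, the dual of `exists_lower` gives a meet-homomorphism `ξ ≥ e` with graph in `R`, and
Whitman's condition shows, by induction on the generation of elements as in Whitman's solution of
the word problem, that `ξ` also preserves joins (`exists_latticeHom`). Since `φ` is
compatible with `R`, it is a sharp embedding.

Necessity. For the two conditions (T), stairs over `A` are used: descending sequences of lower
sets in which forming a join costs one level. Both the ideals of the lattice of stairs over `A`
and the filters of the lattice of stairs over the dual of `A` contain copies of `A`, and a sharp
lifting ranks each join-irreducible by the last level on which it occurs
(`Stair.condT_of_joinHom`). For (W), semidistributivity, a consequence of (T), normalises a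
failure `x ∧ y ≤ u ∨ v` so that `u ∨ v ≤ x`. Then `A` embeds into the ideals of an
infinite lattice of copies of the elements of `A` on levels in `ℕ`, where the interval
`[x ∧ y, u ∨ v]` has twice as many levels as the rest; a parity argument excludes a sharp
lifting (`SharpTransfer.whitmanW`).
-/

universe u

/-- `p` is join-irreducible: `p` is not a least element and `p = b ∨ c`
implies `p = b` or `p = c`. -/
def SJoinIrr (S : Type*) [SemilatticeSup S] (p : S) : Prop :=
  ¬ IsBot p ∧ ∀ b c : S, b ⊔ c = p → b = p ∨ c = p

/-- A minimal pair `(p, I)`: `p ∈ J(S)`, `I ⊆ J(S)`, `|I| ≥ 2`, `p ∉ I`, `p ≤ ⋁I`, and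
for every `J ⊆ J(S)`, if `J ≪ I` and `p ≤ ⋁J`, then `I ⊆ J`. -/
def SMinimalPair (S : Type*) [SemilatticeSup S] (p : S) (I : Finset S) : Prop :=
  SJoinIrr S p ∧ (∀ q ∈ I, SJoinIrr S q) ∧ 2 ≤ I.card ∧ p ∉ I ∧
  (∃ hI : I.Nonempty, p ≤ I.sup' hI id) ∧
  ∀ (J : Finset S) (hJ : J.Nonempty), (∀ q ∈ J, SJoinIrr S q) →
    (∀ x ∈ J, ∃ y ∈ I, x ≤ y) → p ≤ J.sup' hJ id → I ⊆ J

/-- Condition (T): there is a linear order `r` on the join-irreducible elements such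
that `r p j` for every minimal pair `(p, I)` and every `j ∈ I`. -/
def CondT (S : Type*) [SemilatticeSup S] : Prop :=
  ∃ r : S → S → Prop,
    (∀ p, SJoinIrr S p → r p p) ∧
    (∀ p q, SJoinIrr S p → SJoinIrr S q → r p q → r q p → p = q) ∧
    (∀ p q s, SJoinIrr S p → SJoinIrr S q → SJoinIrr S s → r p q → r q s → r p s) ∧
    (∀ p q, SJoinIrr S p → SJoinIrr S q → r p q ∨ r q p) ∧
    (∀ (p : S) (I : Finset S), SMinimalPair S p I → ∀ j ∈ I, r p j)

/-- Whitman's condition (W). -/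
def WhitmanW (A : Type*) [Lattice A] : Prop :=
  ∀ x y u v : A, x ⊓ y ≤ u ⊔ v →
    x ⊓ y ≤ u ∨ x ⊓ y ≤ v ∨ x ≤ u ⊔ v ∨ y ≤ u ⊔ v

/-- An ideal of a poset: a nonempty, up-directed lower set. -/
def IsIdealSet (L : Type*) [Preorder L] (I : Set L) : Prop :=
  I.Nonempty ∧ (∀ x y : L, x ≤ y → y ∈ I → x ∈ I) ∧
    ∀ x ∈ I, ∀ y ∈ I, ∃ z ∈ I, x ≤ z ∧ y ≤ z


/-! ### Join-irreducible elements, minimal pairs, and ranks -/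

lemma SMinimalPair.not_le {S : Type*} [SemilatticeSup S] {p : S} {I : Finset S}
    (h : SMinimalPair S p I) {i : S} (hi : i ∈ I) : ¬ p ≤ i := by
  obtain ⟨hp, -, hcard, -, -, hmin⟩ := h
  intro hle
  have := hmin {p} (by simp) (by simpa using hp) (by simpa using ⟨i, hi, hle⟩) (by simp)
  have := Finset.card_le_card this
  simp at this
  omega

lemma SMinimalPair.antichain {S : Type*} [SemilatticeSup S] {p : S} {I : Finset S}
    (h : SMinimalPair S p I) {i j : S} (hi : i ∈ I) (hj : j ∈ I) (hij : i ≤ j) : i = j := by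
  classical
  obtain ⟨hp, hJ, hcard, -, ⟨hne, hle⟩, hmin⟩ := h
  by_contra hne'
  have hj' : j ∈ I.erase i := Finset.mem_erase.2 ⟨fun h => hne' h.symm, hj⟩
  have := hmin (I.erase i) ⟨j, hj'⟩ (fun q hq => hJ q (Finset.mem_of_mem_erase hq))
    (fun x hx => ⟨x, Finset.mem_of_mem_erase hx, le_rfl⟩) (hle.trans ?_)
  · exact Finset.notMem_erase i I (this hi)
  · refine Finset.sup'_le _ _ fun x hx => ?_
    by_cases hxi : x = i
    · subst hxi
      exact hij.trans (Finset.le_sup' id hj')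
    · exact Finset.le_sup' id (Finset.mem_erase.2 ⟨hxi, hx⟩)

/-- In a finite join-semilattice with zero every element is the join of the join-irreducible
elements below it. -/
lemma le_of_sJoinIrr_le {S : Type*} [SemilatticeSup S] [OrderBot S] [Fintype S] {a b : S}
    (h : ∀ p, SJoinIrr S p → p ≤ a → p ≤ b) : a ≤ b := by
  obtain ⟨s, hs, hirr⟩ := exists_supIrred_decomposition a
  rw [← hs]
  refine Finset.sup_le fun p hp => h p ⟨fun hb => (hirr hp).1 hb.isMin, fun b c hbc =>
    (hirr hp).2 hbc⟩ ?_
  rw [← hs]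
  exact Finset.le_sup (f := id) hp

/-- A join cover `p ≤ a ∨ b` of a join-irreducible `p` which is not below `a` or `b` refines to a
minimal pair: among all sets of join-irreducibles which refine `{a, b}` and cover `p`, take one
generating the smallest down-set of join-irreducibles, and keep its maximal elements. -/
lemma exists_sMinimalPair {S : Type*} [SemilatticeSup S] [OrderBot S] [Fintype S] {p a b : S}
    (hp : SJoinIrr S p) (hab : p ≤ a ⊔ b) (ha : ¬ p ≤ a) (hb : ¬ p ≤ b) :
    ∃ I : Finset S, SMinimalPair S p I ∧ ∀ i ∈ I, i ≤ a ∨ i ≤ b := by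
  classical
  let good : Finset S → Prop := fun I =>
    (∀ q ∈ I, SJoinIrr S q) ∧ (∀ q ∈ I, q ≤ a ∨ q ≤ b) ∧ p ≤ I.sup id
  let D : Finset S → Finset S := fun I =>
    Finset.univ.filter fun q => SJoinIrr S q ∧ ∃ i ∈ I, q ≤ i
  have hex : good (Finset.univ.filter fun q => SJoinIrr S q ∧ (q ≤ a ∨ q ≤ b)) := by
    refine ⟨fun q hq => (Finset.mem_filter.1 hq).2.1, fun q hq => (Finset.mem_filter.1 hq).2.2, ?_⟩
    refine hab.trans (sup_le ?_ ?_) <;> refine le_of_sJoinIrr_le fun q hq hqa => ?_ <;>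
      exact Finset.le_sup (f := id) (Finset.mem_filter.2 ⟨Finset.mem_univ _, hq, by tauto⟩)
  obtain ⟨I₀, hI₀, hmin⟩ := Finset.exists_min_image (Finset.univ.filter good)
    (fun I => (D I).card) ⟨_, Finset.mem_filter.2 ⟨Finset.mem_univ _, hex⟩⟩
  have hI₀ : good I₀ := (Finset.mem_filter.1 hI₀).2
  -- the maximal elements of `I₀`
  let I : Finset S := I₀.filter fun i => ∀ j ∈ I₀, i ≤ j → j = i
  have hup : ∀ q ∈ I₀, ∃ i ∈ I, q ≤ i := by
    intro q hq
    obtain ⟨i, hqi, hi⟩ := I₀.exists_le_maximal hq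
    exact ⟨i, Finset.mem_filter.2 ⟨hi.1, fun j hj hij => le_antisymm (hi.2 hj hij) hij⟩, hqi⟩
  have hpI : p ≤ I.sup id := by
    refine hI₀.2.2.trans (Finset.sup_le fun q hq => ?_)
    obtain ⟨i, hi, hqi⟩ := hup q hq
    exact hqi.trans (Finset.le_sup (f := id) hi)
  have hsub : ∀ {q}, q ∈ I → q ∈ I₀ := fun hq => (Finset.mem_filter.1 hq).1
  have hpbot : ¬ p ≤ ⊥ := fun h => hp.1 fun x => h.trans bot_le
  have hnle : ∀ q ∈ I, ¬ p ≤ q := fun q hq hpq =>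
    (hI₀.2.1 q (hsub hq)).elim (fun h => ha (hpq.trans h)) (fun h => hb (hpq.trans h))
  have hne : I.Nonempty := by
    rw [Finset.nonempty_iff_ne_empty]
    intro h0
    rw [h0] at hpI
    exact hpbot (by simpa using hpI)
  refine ⟨I, ⟨hp, fun q hq => hI₀.1 q (hsub hq), ?_, fun h => hnle p h le_rfl,
    ⟨hne, by rwa [Finset.sup'_eq_sup]⟩, ?_⟩, fun i hi => hI₀.2.1 i (hsub hi)⟩
  · by_contra hc
    have : I.card = 1 := by have := hne.card_pos; omega
    obtain ⟨q, hq⟩ := Finset.card_eq_one.1 this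
    rw [hq] at hpI
    exact hnle q (by simp [hq]) (by simpa using hpI)
  · intro J hJne hJ hJI hpJ
    have hgood : good J := by
      refine ⟨hJ, fun q hq => ?_, by rwa [Finset.sup'_eq_sup] at hpJ⟩
      obtain ⟨i, hi, hqi⟩ := hJI q hq
      exact (hI₀.2.1 i (hsub hi)).imp hqi.trans hqi.trans
    have hDsub : D J ⊆ D I₀ := by
      intro q hq
      obtain ⟨-, h1, j, hj, hqj⟩ := Finset.mem_filter.1 hq
      obtain ⟨i, hi, hji⟩ := hJI j hj
      exact Finset.mem_filter.2 ⟨Finset.mem_univ _, h1, i, hsub hi, hqj.trans hji⟩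
    have hD : D J = D I₀ := Finset.eq_of_subset_of_card_le hDsub
      (hmin J (Finset.mem_filter.2 ⟨Finset.mem_univ _, hgood⟩))
    intro i hi
    have hiD : i ∈ D I₀ :=
      Finset.mem_filter.2 ⟨Finset.mem_univ _, hI₀.1 i (hsub hi), i, hsub hi, le_rfl⟩
    rw [← hD] at hiD
    obtain ⟨-, -, j, hj, hij⟩ := Finset.mem_filter.1 hiD
    obtain ⟨i', hi', hji'⟩ := hJI j hj
    have := (Finset.mem_filter.1 hi).2 i' (hsub hi') (hij.trans hji')
    subst this
    rwa [le_antisymm hij hji']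

/-- Condition (T) in terms of a rank: minimal pairs strictly increase the position in `⊴`. -/
lemma CondT.exists_rank {S : Type*} [SemilatticeSup S] [Fintype S] (h : CondT S) :
    ∃ n : S → ℕ, ∀ p I, SMinimalPair S p I → ∀ j ∈ I, n p < n j := by
  classical
  obtain ⟨r, hrefl, hanti, htrans, -, hpair⟩ := h
  refine ⟨fun p => (Finset.univ.filter fun q => SJoinIrr S q ∧ r q p ∧ q ≠ p).card, ?_⟩
  intro p I hI j hj
  have hp := hI.1
  have hjI := hI.2.1 j hj
  have hpj := hpair p I hI j hj
  have hne : p ≠ j := fun h => hI.2.2.2.1 (h ▸ hj)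
  apply Finset.card_lt_card
  rw [Finset.ssubset_iff_of_subset]
  · exact ⟨p, by simp [hp, hpj, hne], by simp⟩
  · intro q hq
    obtain ⟨-, h1, h2, h3⟩ := Finset.mem_filter.1 hq
    refine Finset.mem_filter.2 ⟨Finset.mem_univ _, h1, htrans q p j h1 hp hjI h2 hpj, ?_⟩
    rintro rfl
    exact hne (hanti p q hp h1 hpj h2)

/-- A rank which strictly increases along minimal pairs yields (T): sort by rank, breaking ties
by an enumeration. -/
lemma condT_of_rank {S : Type*} [SemilatticeSup S] [Fintype S] (n : S → ℤ)
    (h : ∀ p I, SMinimalPair S p I → ∀ j ∈ I, n p < n j) : CondT S := by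
  let e := Fintype.equivFin S
  refine ⟨fun p q => toLex (n p, e p) ≤ toLex (n q, e q), fun p _ => le_rfl, ?_, ?_, ?_, ?_⟩
  · intro p q _ _ h1 h2
    have := le_antisymm h1 h2
    simpa using (Prod.ext_iff.1 (toLex.injective this)).2
  · exact fun p q s _ _ _ h1 h2 => h1.trans h2
  · exact fun p q _ _ => le_total _ _
  · exact fun p I hI j hj => Prod.Lex.toLex_le_toLex.2 (Or.inl (h p I hI j hj))

/-- (T) implies semidistributivity, in the form needed below. -/
lemma le_of_sup_eq_of_rank {A : Type*} [Lattice A] [OrderBot A] [Fintype A] {n : A → ℕ}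
    (hn : ∀ p I, SMinimalPair A p I → ∀ j ∈ I, n p < n j) {x y b : A}
    (hxy : x ⊔ b = y ⊔ b) (hb : x ⊓ y ≤ b) : x ≤ b := by
  classical
  by_contra hx
  let s : Finset A := Finset.univ.filter fun p => SJoinIrr A p ∧ p ≤ x ⊔ b ∧ ¬ p ≤ b
  have hs : s.Nonempty := by
    by_contra hs
    refine hx (le_of_sJoinIrr_le fun p hp hpx => ?_)
    by_contra hpb
    exact hs ⟨p, Finset.mem_filter.2 ⟨Finset.mem_univ _, hp, hpx.trans le_sup_left, hpb⟩⟩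
  obtain ⟨p, hps, hmax⟩ := Finset.exists_max_image s n hs
  obtain ⟨-, hp, hpx, hpb⟩ := Finset.mem_filter.1 hps
  have key : ∀ z, z ⊔ b = x ⊔ b → p ≤ z := by
    intro z hz
    by_contra hpz
    obtain ⟨I, hI, hIz⟩ := exists_sMinimalPair hp (hz ▸ hpx) hpz hpb
    obtain ⟨hne, hle⟩ := hI.2.2.2.2.1
    refine hpb (hle.trans (Finset.sup'_le _ _ fun i hi => ?_))
    by_contra hib
    refine absurd (hmax i (Finset.mem_filter.2 ⟨Finset.mem_univ _, hI.2.1 i hi, ?_, hib⟩))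
      (not_le.2 (hn p I hI i hi))
    rw [← hz]
    exact (hIz i hi).elim (fun h => h.trans le_sup_left) (fun h => h.trans le_sup_right)
  exact hpb ((le_inf (key x rfl) (key y hxy.symm)).trans hb)

/-! ### Join-preserving maps prescribed on join-irreducible elements -/

/-- A map on the join-irreducible elements (and `⊥`) compatible with all minimal pairs extends to a
join-homomorphism: send `a` to the join of the values at the join-irreducibles below `a`.
The last clause records that `e a` is a join of values of `E` over a set with join `a`. -/
lemma exists_joinExt {A L : Type*} [SemilatticeSup A] [OrderBot A] [Fintype A] [SemilatticeSup L]
    (E : A → L)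
    (hE : ∀ p I, SMinimalPair A p I → ∀ c, (∀ i ∈ I, E i ≤ c) → E p ≤ c) :
    ∃ e : A → L, Monotone e ∧ (∀ a b, e (a ⊔ b) ≤ e a ⊔ e b) ∧
      ∀ a, ∃ (s : Finset A) (hs : s.Nonempty), e a = s.sup' hs E ∧ s.sup' hs id = a := by
  classical
  let s : A → Finset A := fun a => Finset.univ.filter fun p => (p = ⊥ ∨ SJoinIrr A p) ∧ p ≤ a
  have hmem : ∀ {a p}, p ∈ s a ↔ (p = ⊥ ∨ SJoinIrr A p) ∧ p ≤ a := by simp [s]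
  have hs : ∀ a, (s a).Nonempty := fun a => ⟨⊥, hmem.2 ⟨Or.inl rfl, bot_le⟩⟩
  have hle : ∀ {a p}, (p = ⊥ ∨ SJoinIrr A p) → p ≤ a → E p ≤ (s a).sup' (hs a) E :=
    fun h1 h2 => Finset.le_sup' E (hmem.2 ⟨h1, h2⟩)
  refine ⟨fun a => (s a).sup' (hs a) E, ?_, ?_, fun a => ⟨s a, hs a, rfl, ?_⟩⟩
  · exact fun a b hab => Finset.sup'_le _ _ fun p hp =>
      hle (hmem.1 hp).1 ((hmem.1 hp).2.trans hab)
  · refine fun a b => Finset.sup'_le _ _ fun p hp => ?_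
    obtain ⟨hp1, hp2⟩ := hmem.1 hp
    by_cases ha : p ≤ a
    · exact (hle hp1 ha).trans le_sup_left
    by_cases hb : p ≤ b
    · exact (hle hp1 hb).trans le_sup_right
    have hpJ : SJoinIrr A p := hp1.resolve_left fun h => ha (h ▸ bot_le)
    obtain ⟨I, hI, hIab⟩ := exists_sMinimalPair hpJ hp2 ha hb
    refine hE p I hI _ fun i hi => ?_
    have hiJ : i = ⊥ ∨ SJoinIrr A i := Or.inr (hI.2.1 i hi)
    exact (hIab i hi).elim (fun h => (hle hiJ h).trans le_sup_left)
      (fun h => (hle hiJ h).trans le_sup_right)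
  · refine le_antisymm (Finset.sup'_le _ _ fun p hp => (hmem.1 hp).2) ?_
    exact le_of_sJoinIrr_le fun p hp hpa => Finset.le_sup' id (hmem.2 ⟨Or.inr hp, hpa⟩)

/-! ### A sharp join-homomorphism from (T) for joins -/

/-- If `l` lies in the join of the ideals `φ i`, `i ∈ I`, then it lies below a join of elements
of these ideals. -/
lemma exists_cover_of_mem {A L : Type*} [SemilatticeSup A] [Lattice L] {φ : A → Set L}
    (hsup : ∀ a, ∀ l ∈ φ a, ∀ l' ∈ φ a, l ⊔ l' ∈ φ a)
    (hne : ∀ a, (φ a).Nonempty)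
    (hjoin : ∀ a b, ∀ l ∈ φ (a ⊔ b), ∃ g ∈ φ a, ∃ h ∈ φ b, l ≤ g ⊔ h)
    {I : Finset A} (hI : I.Nonempty) : ∀ l ∈ φ (I.sup' hI id),
    ∃ w : A → L, (∀ i, w i ∈ φ i) ∧ ∀ c, (∀ i ∈ I, w i ≤ c) → l ≤ c := by
  classical
  choose z hz using hne
  induction hI using Finset.Nonempty.cons_induction with
  | singleton a =>
    intro l hl
    refine ⟨Function.update z a l, fun i => ?_, fun c hc => ?_⟩
    · by_cases hi : i = a
      · subst hi; simpa using hl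
      · simpa [hi] using hz i
    · simpa using hc a (by simp)
  | cons a s ha hs ih =>
    intro l hl
    rw [Finset.sup'_cons hs] at hl
    obtain ⟨g, hg, h, hh, hl⟩ := hjoin _ _ l hl
    obtain ⟨w, hw, hwc⟩ := ih h hh
    refine ⟨Function.update w a (w a ⊔ g), fun i => ?_, fun c hc => hl.trans (sup_le ?_ ?_)⟩
    · by_cases hi : i = a
      · subst hi; simpa using hsup _ _ (hw i) _ hg
      · simpa [hi] using hw i
    · have := hc a (by simp)
      simp only [Function.update_self] at this
      exact le_sup_right.trans this
    · refine hwc c fun i hi => ?_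
      have hia : i ≠ a := fun h => ha (h ▸ hi)
      simpa [hia] using hc i (by simp [hi])

/-- Starting with sharp elements of the ideals, enlarge them step by step so that
stage `k + 1` covers stage `k` across every minimal pair of `A`. Reading off the value at `p` at
the stage given by the rank of `p` makes all minimal pairs hold. -/
lemma exists_sharp_joinHom {A L : Type*} [Lattice A] [OrderBot A] [Fintype A] [Lattice L]
    {n : A → ℕ} (hn : ∀ p I, SMinimalPair A p I → ∀ j ∈ I, n p < n j) {φ : A → Set L}
    (hlow : ∀ a, ∀ l l', l ≤ l' → l' ∈ φ a → l ∈ φ a)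
    (hsup : ∀ a, ∀ l ∈ φ a, ∀ l' ∈ φ a, l ⊔ l' ∈ φ a)
    (hne : ∀ a, (φ a).Nonempty)
    (hjoin : ∀ a b, ∀ l ∈ φ (a ⊔ b), ∃ g ∈ φ a, ∃ h ∈ φ b, l ≤ g ⊔ h)
    (hmono : ∀ a b, a ≤ b → φ a ⊆ φ b)
    (hsep : ∀ a b, φ a ⊆ φ b → a ≤ b) :
    ∃ e : A → L, Monotone e ∧ (∀ a b, e (a ⊔ b) ≤ e a ⊔ e b) ∧ (∀ a, e a ∈ φ a) ∧
      ∀ a b, e a ∈ φ b → a ≤ b := by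
  classical
  have hsharp : ∀ a, ∃ l ∈ φ a, ∀ b, l ∈ φ b → a ≤ b := by
    intro a
    have : ∀ b, ∃ l ∈ φ a, l ∈ φ b → a ≤ b := by
      intro b
      by_cases hab : a ≤ b
      · obtain ⟨l, hl⟩ := hne a
        exact ⟨l, hl, fun _ => hab⟩
      · obtain ⟨l, hl, hl'⟩ := Set.not_subset.1 fun h => hab (hsep a b h)
        exact ⟨l, hl, fun h => absurd h hl'⟩
    choose l hl hl' using this
    refine ⟨Finset.univ.sup' ⟨a, Finset.mem_univ a⟩ l,
      Finset.sup'_mem (φ a) (hsup a) _ _ _ fun i _ => hl i, fun b hb => hl' b ?_⟩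
    exact hlow _ _ _ (Finset.le_sup' l (Finset.mem_univ b)) hb
  choose e₀ he₀ he₀' using hsharp
  have step : ∀ e : (∀ a, φ a), ∃ w : (∀ a, φ a), (∀ a, (e a : L) ≤ w a) ∧
      ∀ p I, SMinimalPair A p I → ∀ c : L, (∀ i ∈ I, (w i : L) ≤ c) → (e p : L) ≤ c := by
    intro e
    have : ∀ x : A × Finset A, ∃ w : A → L, (∀ i, w i ∈ φ i) ∧
        (SMinimalPair A x.1 x.2 → ∀ c, (∀ i ∈ x.2, w i ≤ c) → (e x.1 : L) ≤ c) := by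
      rintro ⟨p, I⟩
      by_cases hI : SMinimalPair A p I
      · obtain ⟨hIne, hle⟩ := hI.2.2.2.2.1
        obtain ⟨w, h1, h2⟩ := exists_cover_of_mem hsup hne hjoin hIne (e p)
          (hmono _ _ hle (e p).2)
        exact ⟨w, h1, fun _ => h2⟩
      · exact ⟨fun a => e a, fun a => (e a).2, fun h => absurd h hI⟩
    choose w hw hwc using this
    have huniv : (Finset.univ : Finset (A × Finset A)).Nonempty := ⟨(⊥, ∅), Finset.mem_univ _⟩
    refine ⟨fun a => ⟨e a ⊔ Finset.univ.sup' huniv fun x => w x a, hsup a _ (e a).2 _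
      (Finset.sup'_mem (φ a) (hsup a) _ _ _ fun x _ => hw x a)⟩, fun a => le_sup_left, ?_⟩
    intro p I hI c hc
    refine hwc (p, I) hI c fun i hi => le_trans ?_ (hc i hi)
    exact le_sup_of_le_right
      (Finset.le_sup' (fun x => w x i) (Finset.mem_univ ((p, I) : A × Finset A)))
  choose next hnext hcov using step
  let W : ℕ → ∀ a, φ a := fun k => k.rec (fun a => ⟨e₀ a, he₀ a⟩) fun _ e => next e
  have hW : ∀ a, Monotone fun k : ℕ => (W k a).1 := by
    intro a
    exact monotone_nat_of_le_succ (f := fun k : ℕ => (W k a).1) fun k => hnext (W k) a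
  obtain ⟨e, hemono, hesup, he⟩ := exists_joinExt (fun p => (W (n p) p).1) fun p I hI c hc =>
    hcov (W (n p)) p I hI c fun i hi => (hW i (hn p I hI i hi)).trans (hc i hi)
  refine ⟨e, hemono, hesup, fun a => ?_, fun a b hab => ?_⟩
  · obtain ⟨s, hs, h1, h2⟩ := he a
    rw [h1]
    refine Finset.sup'_mem (φ a) (hsup a) _ _ _ fun p hp => hmono p a ?_ (W (n p) p).2
    rw [← h2]
    exact Finset.le_sup' id hp
  · obtain ⟨s, hs, h1, h2⟩ := he a
    rw [← h2]
    refine Finset.sup'_le _ _ fun p hp => he₀' p b (hlow _ _ _ ?_ hab)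
    rw [h1]
    exact (hW p (Nat.zero_le (n p))).trans (Finset.le_sup' (fun p => (W (n p) p).1) hp)

/-! ### Least preimages from (T) -/

/-- Lower boundedness. Let `R` be a sublattice of `A × L` containing the graph of a monotone
map `e`. Then there is a join-homomorphism `β ≤ e` whose graph lies in `R`.
It is obtained by repeatedly meeting `e` with its joins over minimal pairs; the rank tells how
often this has to be repeated at each join-irreducible. -/
lemma exists_lower {A L : Type*} [Lattice A] [OrderBot A] [Fintype A] [Lattice L]
    {n : A → ℕ} (hn : ∀ p I, SMinimalPair A p I → ∀ j ∈ I, n p < n j)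
    (R : A → L → Prop) (hsup : ∀ a b l m, R a l → R b m → R (a ⊔ b) (l ⊔ m))
    (hinf : ∀ a b l m, R a l → R b m → R (a ⊓ b) (l ⊓ m))
    {e : A → L} (he : Monotone e) (hR : ∀ a, R a (e a)) :
    ∃ β : A → L, Monotone β ∧ (∀ a b, β (a ⊔ b) ≤ β a ⊔ β b) ∧ (∀ a, R a (β a)) ∧
      ∀ a, β a ≤ e a := by
  classical
  have hRsup : ∀ (B : A → L), (∀ a, R a (B a)) → ∀ {s : Finset A} (hs : s.Nonempty),
      R (s.sup' hs id) (s.sup' hs B) := by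
    intro B hB s hs
    induction hs using Finset.Nonempty.cons_induction with
    | singleton a => simpa using hB a
    | cons a s ha hs ih =>
      rw [Finset.sup'_cons hs, Finset.sup'_cons hs]
      exact hsup _ _ _ _ (hB a) ih
  have step : ∀ B : (∀ a, {l // R a l}), ∃ B' : (∀ a, {l // R a l}),
      (∀ a, (B' a : L) ≤ B a) ∧
      ∀ p I, SMinimalPair A p I → ∀ c : L, (∀ i ∈ I, (B i : L) ≤ c) → (B' p : L) ≤ c := by
    intro B
    have : ∀ (p : A) (I : Finset A), ∃ l : L, R p l ∧ l ≤ B p ∧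
        (SMinimalPair A p I → ∀ c : L, (∀ i ∈ I, (B i : L) ≤ c) → l ≤ c) := by
      intro p I
      by_cases hI : SMinimalPair A p I
      · obtain ⟨hIne, hle⟩ := hI.2.2.2.2.1
        refine ⟨B p ⊓ I.sup' hIne fun i => (B i : L), ?_, inf_le_left, fun _ c hc =>
          inf_le_right.trans (Finset.sup'_le _ _ hc)⟩
        have := hinf _ _ _ _ (B p).2 (hRsup (fun i => (B i : L)) (fun i => (B i).2) hIne)
        rwa [inf_eq_left.2 hle] at this
      · exact ⟨B p, (B p).2, le_rfl, fun h => absurd h hI⟩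
    choose w hw hwB hwc using this
    have huniv : (Finset.univ : Finset (Finset A)).Nonempty := ⟨∅, Finset.mem_univ _⟩
    refine ⟨fun a => ⟨Finset.univ.inf' huniv (w a), ?_⟩, fun a => ?_, ?_⟩
    · refine Finset.inf'_induction huniv (w a) (fun l hl m hm => ?_) fun I _ => hw a I
      simpa using hinf _ _ _ _ hl hm
    · exact (Finset.inf'_le (w a) (Finset.mem_univ ∅)).trans (hwB a ∅)
    · exact fun p I hI c hc =>
        (Finset.inf'_le (w p) (Finset.mem_univ I)).trans (hwc p I hI c hc)
  choose next hnext hcov using step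
  let B : ℕ → ∀ a, {l // R a l} := fun k => k.rec (fun a => ⟨e a, hR a⟩) fun _ e => next e
  have hB : ∀ a, Antitone fun k : ℕ => (B k a).1 := by
    intro a
    exact antitone_nat_of_succ_le (f := fun k : ℕ => (B k a).1) fun k => hnext (B k) a
  obtain ⟨N, hN⟩ : ∃ N, ∀ a, n a ≤ N :=
    ⟨Finset.univ.sup n, fun a => Finset.le_sup (Finset.mem_univ a)⟩
  have hBR : ∀ p, R p (B (N - n p) p).1 := fun p => (B (N - n p) p).2
  obtain ⟨β, hmono, hβsup, hβ⟩ := exists_joinExt (fun p => (B (N - n p) p).1) (by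
    intro p I hI c hc
    obtain ⟨i₀, hi₀⟩ := hI.2.2.2.2.1.1
    have h1 : N - n p = (N - n p - 1) + 1 := by
      have := hn p I hI i₀ hi₀
      have := hN i₀
      omega
    have : (B (N - n p) p).1 = next (B (N - n p - 1)) p := by
      rw [h1]; rfl
    rw [this]
    refine hcov _ p I hI c fun i hi => le_trans (hB i ?_) (hc i hi)
    have := hn p I hI i hi
    omega)
  refine ⟨β, hmono, hβsup, fun a => ?_, fun a => ?_⟩
  · obtain ⟨s, hs, h1, h2⟩ := hβ a
    rw [h1]
    conv_lhs => rw [← h2]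
    exact hRsup _ hBR hs
  · obtain ⟨s, hs, h1, h2⟩ := hβ a
    rw [h1]
    refine Finset.sup'_le _ _ fun p hp => (hB p (Nat.zero_le _)).trans (he ?_)
    rw [← h2]
    exact Finset.le_sup' id hp

/-! ### Sufficiency -/

/-- The sublattice of `A × L` generated by the graph of `e`. -/
inductive GenRel {A L : Type*} [Lattice A] [Lattice L] (e : A → L) : A → L → Prop
  | base (a : A) : GenRel e a (e a)
  | sup {a b : A} {l m : L} : GenRel e a l → GenRel e b m → GenRel e (a ⊔ b) (l ⊔ m)
  | inf {a b : A} {l m : L} : GenRel e a l → GenRel e b m → GenRel e (a ⊓ b) (l ⊓ m)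

/-- Given a join-homomorphism `e`, (W) and (T) for meets produce a lattice homomorphism above `e`:
the greatest preimages `α` under the projection to `A` of the sublattice generated by the
graph of `e`. That `α` preserves joins is Whitman's algorithm: elements generated by `e` and
elements generated by `α` compare as their projections do. -/
lemma exists_latticeHom {A L : Type*} [Lattice A] [OrderTop A] [Fintype A] [Lattice L]
    {n : Aᵒᵈ → ℕ} (hn : ∀ p I, SMinimalPair Aᵒᵈ p I → ∀ j ∈ I, n p < n j) (hW : WhitmanW A)
    {e : A → L} (he : Monotone e) (hesup : ∀ a b, e (a ⊔ b) ≤ e a ⊔ e b) :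
    ∃ ξ : A → L, (∀ a, GenRel e a (ξ a)) ∧ (∀ a, e a ≤ ξ a) ∧
      (∀ a b, ξ (a ⊔ b) = ξ a ⊔ ξ b) ∧ ∀ a b, ξ (a ⊓ b) = ξ a ⊓ ξ b := by
  have hdual : ∃ α : A → L, Monotone α ∧ (∀ a b, α a ⊓ α b ≤ α (a ⊓ b)) ∧
      (∀ a, GenRel e a (α a)) ∧ ∀ a, e a ≤ α a := by
    obtain ⟨β, h1, h2, h3, h4⟩ := exists_lower (A := Aᵒᵈ) (L := Lᵒᵈ) hn
      (fun a l => GenRel e (OrderDual.ofDual a) (OrderDual.ofDual l))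
      (fun a b l m h h' => GenRel.inf h h') (fun a b l m h h' => GenRel.sup h h')
      (e := fun a => OrderDual.toDual (e (OrderDual.ofDual a)))
      (fun a b hab => he hab) (fun a => GenRel.base _)
    exact ⟨fun a => OrderDual.ofDual (β (OrderDual.toDual a)), fun a b hab => h1 hab,
      fun a b => h2 (OrderDual.toDual a) (OrderDual.toDual b), fun a => h3 _, fun a => h4 _⟩
  obtain ⟨α, hmono, hinf, hgen, hle⟩ := hdual
  have hupper : ∀ {b l}, GenRel e b l → l ≤ α b := by
    intro b l h
    induction h with
    | base a => exact hle a
    | sup _ _ ih1 ih2 =>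
      exact sup_le (ih1.trans (hmono le_sup_left)) (ih2.trans (hmono le_sup_right))
    | inf _ _ ih1 ih2 => exact (inf_le_inf ih1 ih2).trans (hinf _ _)
  have hlower : ∀ {b l}, GenRel α b l → e b ≤ l := by
    intro b l h
    induction h with
    | base a => exact hle a
    | sup _ _ ih1 ih2 => exact (hesup _ _).trans (sup_le_sup ih1 ih2)
    | inf _ _ ih1 ih2 =>
      exact le_inf ((he inf_le_left).trans ih1) ((he inf_le_right).trans ih2)
  have key : ∀ {s l}, GenRel e s l → ∀ {t m}, GenRel α t m → s ≤ t → l ≤ m := by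
    intro s l hs
    induction hs with
    | base a => exact fun ht hst => (he hst).trans (hlower ht)
    | sup _ _ ih1 ih2 =>
      exact fun ht hst => sup_le (ih1 ht (le_sup_left.trans hst)) (ih2 ht (le_sup_right.trans hst))
    | inf h1 h2 ih1 ih2 =>
      intro t m ht
      induction ht with
      | base c => exact fun hst => (hupper (GenRel.inf h1 h2)).trans (hmono hst)
      | sup g1 g2 jh1 jh2 =>
        intro hst
        rcases hW _ _ _ _ hst with h | h | h | h
        · exact (jh1 h).trans le_sup_left
        · exact (jh2 h).trans le_sup_right
        · exact inf_le_left.trans (ih1 (GenRel.sup g1 g2) h)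
        · exact inf_le_right.trans (ih2 (GenRel.sup g1 g2) h)
      | inf g1 g2 jh1 jh2 =>
        exact fun hst => le_inf (jh1 (hst.trans inf_le_left)) (jh2 (hst.trans inf_le_right))
  refine ⟨α, hgen, hle, fun a b => le_antisymm ?_ ?_, fun a b => le_antisymm ?_ (hinf a b)⟩
  · exact key (hgen _) (GenRel.sup (GenRel.base a) (GenRel.base b)) le_rfl
  · exact sup_le (hmono le_sup_left) (hmono le_sup_right)
  · exact le_inf (hmono inf_le_left) (hmono inf_le_right)

lemma exists_sharp_embedding {A L : Type*} [Lattice A] [BoundedOrder A] [Fintype A] [Lattice L]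
    (hTj : CondT A) (hTm : CondT Aᵒᵈ) (hW : WhitmanW A) (φ : A → Set L)
    (hid : ∀ x, IsIdealSet L (φ x)) (hinj : Function.Injective φ)
    (hsup : ∀ x y : A, IsLeast {I : Set L | IsIdealSet L I ∧ φ x ∪ φ y ⊆ I} (φ (x ⊔ y)))
    (hinf : ∀ x y : A, φ (x ⊓ y) = φ x ∩ φ y) :
    ∃ ξ : A → L, Function.Injective ξ ∧
      (∀ x y, ξ (x ⊔ y) = ξ x ⊔ ξ y) ∧ (∀ x y, ξ (x ⊓ y) = ξ x ⊓ ξ y) ∧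
      ∀ x y : A, ξ x ∈ φ y ↔ x ≤ y := by
  obtain ⟨n, hn⟩ := hTj.exists_rank
  obtain ⟨n', hn'⟩ := hTm.exists_rank
  have hlow : ∀ a, ∀ l l', l ≤ l' → l' ∈ φ a → l ∈ φ a := fun a => (hid a).2.1
  have hdir : ∀ a, ∀ l ∈ φ a, ∀ l' ∈ φ a, l ⊔ l' ∈ φ a := by
    intro a l hl l' hl'
    obtain ⟨z, hz, h1, h2⟩ := (hid a).2.2 l hl l' hl'
    exact hlow a _ z (sup_le h1 h2) hz
  have hmono : ∀ a b, a ≤ b → φ a ⊆ φ b := by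
    intro a b hab
    have := hinf a b
    rw [inf_eq_left.2 hab] at this
    rw [this]
    exact Set.inter_subset_right
  have hsep : ∀ a b, φ a ⊆ φ b → a ≤ b := by
    intro a b hab
    rw [← inf_eq_left]
    apply hinj
    rw [hinf, Set.inter_eq_left.2 hab]
  have hjoin : ∀ a b, ∀ l ∈ φ (a ⊔ b), ∃ g ∈ φ a, ∃ h ∈ φ b, l ≤ g ⊔ h := by
    intro a b
    obtain ⟨g₀, hg₀⟩ := (hid a).1
    obtain ⟨h₀, hh₀⟩ := (hid b).1
    suffices hmem : {l | ∃ g ∈ φ a, ∃ h ∈ φ b, l ≤ g ⊔ h} ∈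
        {I : Set L | IsIdealSet L I ∧ φ a ∪ φ b ⊆ I} by
      exact fun l hl => (hsup a b).2 hmem hl
    refine ⟨⟨?_, ?_, ?_⟩, ?_⟩
    · exact ⟨g₀, g₀, hg₀, h₀, hh₀, le_sup_left⟩
    · rintro x y hxy ⟨g, hg, h, hh, hle⟩
      exact ⟨g, hg, h, hh, hxy.trans hle⟩
    · rintro x ⟨g, hg, h, hh, hle⟩ y ⟨g', hg', h', hh', hle'⟩
      exact ⟨x ⊔ y, ⟨g ⊔ g', hdir a _ hg _ hg', h ⊔ h', hdir b _ hh _ hh',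
        sup_le (hle.trans (sup_le_sup le_sup_left le_sup_left))
          (hle'.trans (sup_le_sup le_sup_right le_sup_right))⟩, le_sup_left, le_sup_right⟩
    · rintro x (hx | hx)
      · exact ⟨x, hx, h₀, hh₀, le_sup_left⟩
      · exact ⟨g₀, hg₀, x, hx, le_sup_right⟩
  obtain ⟨e, hemono, hesup, hemem, hesharp⟩ :=
    exists_sharp_joinHom hn hlow hdir (fun a => (hid a).1) hjoin hmono hsep
  obtain ⟨ξ, hgen, hle, hξsup, hξinf⟩ := exists_latticeHom hn' hW hemono hesup
  have hmem : ∀ {a l}, GenRel e a l → l ∈ φ a := by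
    intro a l h
    induction h with
    | base a => exact hemem a
    | sup _ _ ih1 ih2 =>
      exact hdir _ _ (hmono _ _ le_sup_left ih1) _ (hmono _ _ le_sup_right ih2)
    | inf _ _ ih1 ih2 =>
      rw [hinf]
      exact ⟨hlow _ _ _ inf_le_left ih1, hlow _ _ _ inf_le_right ih2⟩
  have hiff : ∀ x y : A, ξ x ∈ φ y ↔ x ≤ y := fun x y =>
    ⟨fun h => hesharp x y (hlow _ _ _ (hle x) h), fun h => hmono x y h (hmem (hgen x))⟩
  refine ⟨ξ, fun x y hxy => le_antisymm ?_ ?_, hξsup, hξinf, hiff⟩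
  · rw [← hiff, hxy, hiff]
  · rw [← hiff, ← hxy, hiff]

/-! ### The lattice of stairs -/

/-- A stair over `A`: a descending `ℤ`-indexed sequence of nonempty lower sets of `A`, eventually
`{⊥}`, such that each term contains an upper bound of the next one. -/
structure Stair (A : Type*) [Lattice A] [OrderBot A] where
  /-- The terms of the sequence. -/
  lev : ℤ → Set A
  lower : ∀ n, ∀ x y, x ≤ y → y ∈ lev n → x ∈ lev n
  bot_mem : ∀ n, ⊥ ∈ lev n
  bound : ∀ n, ∃ c ∈ lev n, ∀ x ∈ lev (n + 1), x ≤ c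
  fin : ∃ N, ∀ n, N ≤ n → ∀ x ∈ lev n, x = ⊥

namespace Stair

variable {A : Type*} [Lattice A] [OrderBot A]

instance : PartialOrder (Stair A) :=
  PartialOrder.lift Stair.lev fun f g h => by cases f; cases g; cases h; rfl

lemma le_def {f g : Stair A} : f ≤ g ↔ ∀ n, ∀ x ∈ f.lev n, x ∈ g.lev n := Iff.rfl

lemma succ_subset (f : Stair A) {n : ℤ} {x : A} (hx : x ∈ f.lev (n + 1)) : x ∈ f.lev n := by
  obtain ⟨c, hc, h⟩ := f.bound n
  exact f.lower n x c (h x hx) hc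

lemma mem_of_le (f : Stair A) {m n : ℤ} (h : m ≤ n) {x : A} (hx : x ∈ f.lev n) : x ∈ f.lev m := by
  induction n, h using Int.leInduction with
  | base => exact hx
  | succ n _ ih => exact ih (f.succ_subset hx)

lemma exists_isLUB [Fintype A] (s : Set A) : ∃ c, IsLUB s c := by
  classical
  refine ⟨(Finset.univ.filter (· ∈ s)).sup id, fun x hx => ?_, fun u hu => ?_⟩
  · exact Finset.le_sup (f := id) (Finset.mem_filter.2 ⟨Finset.mem_univ _, hx⟩)
  · exact Finset.sup_le fun x hx => hu (Finset.mem_filter.1 hx).2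

/-- The pointwise intersection. -/
def inf (f g : Stair A) : Stair A where
  lev n := f.lev n ∩ g.lev n
  lower n x y hxy hy := ⟨f.lower n x y hxy hy.1, g.lower n x y hxy hy.2⟩
  bot_mem n := ⟨f.bot_mem n, g.bot_mem n⟩
  bound n := by
    obtain ⟨c, hc, h⟩ := f.bound n
    obtain ⟨d, hd, h'⟩ := g.bound n
    exact ⟨c ⊓ d, ⟨f.lower n _ c inf_le_left hc, g.lower n _ d inf_le_right hd⟩,
      fun x hx => le_inf (h x hx.1) (h' x hx.2)⟩
  fin := by
    obtain ⟨N, hN⟩ := f.fin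
    exact ⟨N, fun n hn x hx => hN n hn x hx.1⟩

/-- The join of two stairs: besides the union, level `n` contains everything below the join of
the union at level `n + 1`. So a join in `A` can be formed only one level further down. -/
def sup [Fintype A] (f g : Stair A) : Stair A where
  lev n := {x | x ∈ f.lev n ∨ x ∈ g.lev n ∨
    ∀ u, (∀ z ∈ f.lev (n + 1), z ≤ u) → (∀ z ∈ g.lev (n + 1), z ≤ u) → x ≤ u}
  lower n x y hxy := by
    rintro (hy | hy | hy)
    · exact Or.inl (f.lower n x y hxy hy)
    · exact Or.inr (Or.inl (g.lower n x y hxy hy))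
    · exact Or.inr (Or.inr fun u h1 h2 => hxy.trans (hy u h1 h2))
  bot_mem n := Or.inl (f.bot_mem n)
  bound n := by
    obtain ⟨c, hc⟩ := exists_isLUB (f.lev (n + 1) ∪ g.lev (n + 1))
    refine ⟨c, Or.inr (Or.inr fun u h1 h2 => hc.2 ?_), ?_⟩
    · rintro z (hz | hz)
      exacts [h1 z hz, h2 z hz]
    · rintro x (hx | hx | hx)
      · exact hc.1 (Or.inl hx)
      · exact hc.1 (Or.inr hx)
      · exact hx c (fun z hz => hc.1 (Or.inl (f.succ_subset hz)))
          (fun z hz => hc.1 (Or.inr (g.succ_subset hz)))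
  fin := by
    obtain ⟨N, hN⟩ := f.fin
    obtain ⟨M, hM⟩ := g.fin
    refine ⟨max N M, fun n hn x hx => ?_⟩
    have h1 : N ≤ n := (le_max_left N M).trans hn
    have h2 : M ≤ n := (le_max_right N M).trans hn
    rcases hx with hx | hx | hx
    · exact hN n h1 x hx
    · exact hM n h2 x hx
    · exact le_bot_iff.1 (hx ⊥ (fun z hz => (hN _ (by omega) z hz).le)
        (fun z hz => (hM _ (by omega) z hz).le))

instance [Fintype A] : Lattice (Stair A) where
  sup := sup
  inf := inf
  le_sup_left f g n x hx := Or.inl hx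
  le_sup_right f g n x hx := Or.inr (Or.inl hx)
  sup_le f g k hf hg n x hx := by
    rcases hx with hx | hx | hx
    · exact hf n hx
    · exact hg n hx
    · obtain ⟨c, hc, h⟩ := k.bound n
      exact k.lower n x c (hx c (fun z hz => h z (hf _ hz)) (fun z hz => h z (hg _ hz))) hc
  inf_le_left f g n x hx := hx.1
  inf_le_right f g n x hx := hx.2
  le_inf f g k hf hg n x hx := ⟨hf n hx, hg n hx⟩

lemma mem_sup [Fintype A] {f g : Stair A} {n : ℤ} {x : A} : x ∈ (f ⊔ g).lev n ↔
    x ∈ f.lev n ∨ x ∈ g.lev n ∨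
      ∀ u, (∀ z ∈ f.lev (n + 1), z ≤ u) → (∀ z ∈ g.lev (n + 1), z ≤ u) → x ≤ u := Iff.rfl

lemma mem_inf [Fintype A] {f g : Stair A} {n : ℤ} {x : A} :
    x ∈ (f ⊓ g).lev n ↔ x ∈ f.lev n ∧ x ∈ g.lev n := Iff.rfl

/-- The stair which is the principal ideal of `a` up to level `N`, and `{⊥}` from there on. -/
def step (a : A) (N : ℤ) : Stair A where
  lev n := {x | x ≤ a ∧ (n ≤ N ∨ x = ⊥)}
  lower n x y hxy hy := ⟨hxy.trans hy.1, hy.2.imp_right fun h => le_bot_iff.1 (hxy.trans (le_of_eq h))⟩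
  bot_mem n := ⟨bot_le, Or.inr rfl⟩
  bound n := by
    by_cases h : n + 1 ≤ N
    · exact ⟨a, ⟨le_rfl, Or.inl (by omega)⟩, fun x hx => hx.1⟩
    · exact ⟨⊥, ⟨bot_le, Or.inr rfl⟩, fun x hx => (hx.2.resolve_left h).le⟩
  fin := ⟨N + 1, fun n hn x hx => hx.2.resolve_left (by omega)⟩

lemma mem_step {a x : A} {N n : ℤ} : x ∈ (step a N).lev n ↔ x ≤ a ∧ (n ≤ N ∨ x = ⊥) := Iff.rfl

/-- Since joins of stairs drop one level, a join-homomorphism `ξ` from `A` to stairs with `a` the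
largest element occurring in `ξ a` yields (T): rank a join-irreducible `p` by the last level
at which `p` occurs in `ξ p`. -/
lemma condT_of_joinHom [Fintype A] (ξ : A → Stair A) (hsup : ∀ a b, ξ (a ⊔ b) = ξ a ⊔ ξ b)
    (hmem : ∀ a b, (∃ n, b ∈ (ξ a).lev n) ↔ b ≤ a) : CondT A := by
  classical
  have hmono : ∀ a b, a ≤ b → ξ a ≤ ξ b := by
    intro a b hab
    have := hsup a b
    rw [sup_eq_right.2 hab] at this
    rw [this]
    exact le_sup_left
  have hlast : ∀ p, ∃ n : ℤ, SJoinIrr A p →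
      p ∈ (ξ p).lev n ∧ ∀ m, p ∈ (ξ p).lev m → m ≤ n := by
    intro p
    by_cases hp : SJoinIrr A p
    · have hbdd : ∃ N : ℤ, ∀ m, p ∈ (ξ p).lev m → m ≤ N := by
        obtain ⟨N, hN⟩ := (ξ p).fin
        refine ⟨N, fun m hm => ?_⟩
        by_contra hlt
        have := hN m (by omega) p hm
        exact hp.1 fun x => this ▸ bot_le
      obtain ⟨n, h1, h2⟩ := Int.exists_greatest_of_bdd hbdd ((hmem p p).2 le_rfl)
      exact ⟨n, fun _ => ⟨h1, h2⟩⟩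
    · exact ⟨0, fun h => absurd h hp⟩
  choose n hn using hlast
  have hcover : ∀ (I : Finset A) (hI : I.Nonempty), ∀ (k : ℤ) (x : A),
      x ∈ (ξ (I.sup' hI id)).lev k → (∃ i ∈ I, x ∈ (ξ i).lev k) ∨
        ∀ u, (∀ i ∈ I, ∀ z ∈ (ξ i).lev (k + 1), z ≤ u) → x ≤ u := by
    intro I hI
    induction hI using Finset.Nonempty.cons_induction with
    | singleton a =>
      intro k x hx
      exact Or.inl ⟨a, by simp, by simpa using hx⟩
    | cons a s ha hs ih =>
      intro k x hx
      rw [Finset.sup'_cons hs, hsup, mem_sup] at hx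
      rcases hx with hx | hx | hx
      · exact Or.inl ⟨a, by simp, hx⟩
      · rcases ih k x hx with ⟨i, hi, h⟩ | h
        · exact Or.inl ⟨i, by simp [hi], h⟩
        · exact Or.inr fun u hu => h u fun i hi => hu i (by simp [hi])
      · refine Or.inr fun u hu => hx u (hu a (by simp)) fun z hz => ?_
        rcases ih (k + 1) z hz with ⟨i, hi, h⟩ | h
        · exact hu i (by simp [hi]) z h
        · exact h u fun i hi y hy => hu i (by simp [hi]) y ((ξ i).succ_subset hy)
  refine condT_of_rank n fun p I hI j hj => ?_
  obtain ⟨hIne, hle⟩ := hI.2.2.2.2.1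
  rcases hcover I hIne (n p) p (hmono _ _ hle _ (hn p hI.1).1) with ⟨i, hi, h⟩ | h
  · exact absurd ((hmem i p).1 ⟨_, h⟩) (hI.not_le hi)
  let J : Finset A := Finset.univ.filter fun q => SJoinIrr A q ∧ ∃ i ∈ I, q ∈ (ξ i).lev (n p + 1)
  have hJ : ∀ {q}, q ∈ J ↔ SJoinIrr A q ∧ ∃ i ∈ I, q ∈ (ξ i).lev (n p + 1) := by simp [J]
  have hpJ : p ≤ J.sup id := h _ fun i hi z hz => le_of_sJoinIrr_le fun q hq hqz =>
    Finset.le_sup (f := id) (hJ.2 ⟨hq, i, hi, (ξ i).lower _ q z hqz hz⟩)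
  have hJne : J.Nonempty := by
    rw [Finset.nonempty_iff_ne_empty]
    intro h0
    rw [h0] at hpJ
    exact hI.1.1 fun x => hpJ.trans bot_le
  have hIJ : I ⊆ J := hI.2.2.2.2.2 J hJne (fun q hq => (hJ.1 hq).1)
    (fun q hq => by
      obtain ⟨-, i, hi, h⟩ := hJ.1 hq
      exact ⟨i, hi, (hmem i q).1 ⟨_, h⟩⟩)
    (by rwa [Finset.sup'_eq_sup])
  obtain ⟨hjirr, i, hi, hji⟩ := hJ.1 (hIJ hj)
  have hij := hI.antichain hj hi ((hmem i j).1 ⟨_, hji⟩)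
  subst hij
  have := (hn j hjirr).2 _ hji
  omega

end Stair

/-! ### Necessity of (T) for joins and meets -/

/-- Sharp transferability of `A`, with embeddings into ideal lattices spelled out. -/
def SharpTransfer (A : Type u) [Lattice A] : Prop :=
  ∀ (L : Type u) [Lattice L] (φ : A → Set L),
    (∀ x, IsIdealSet L (φ x)) →
    Function.Injective φ →
    (∀ x y : A, IsLeast {I : Set L | IsIdealSet L I ∧ φ x ∪ φ y ⊆ I} (φ (x ⊔ y))) →
    (∀ x y : A, φ (x ⊓ y) = φ x ∩ φ y) →
    ∃ ξ : A → L, Function.Injective ξ ∧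
      (∀ x y, ξ (x ⊔ y) = ξ x ⊔ ξ y) ∧ (∀ x y, ξ (x ⊓ y) = ξ x ⊓ ξ y) ∧
      ∀ x y : A, ξ x ∈ φ y ↔ x ≤ y

/-- A convenient form of sharp transferability: the hypotheses on `φ` are stated elementwise. -/
lemma SharpTransfer.exists_embedding {A : Type u} [Lattice A] (h : SharpTransfer A) {L : Type u}
    [Lattice L] (φ : A → Set L) (hne : ∀ a, (φ a).Nonempty)
    (hlow : ∀ a, ∀ l l', l ≤ l' → l' ∈ φ a → l ∈ φ a)
    (hdir : ∀ a, ∀ l ∈ φ a, ∀ l' ∈ φ a, l ⊔ l' ∈ φ a)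
    (hsep : ∀ a, ∃ l ∈ φ a, ∀ b, l ∈ φ b → a ≤ b)
    (hjoin : ∀ a b, ∀ l ∈ φ (a ⊔ b), ∃ g ∈ φ a, ∃ g' ∈ φ b, l ≤ g ⊔ g')
    (hinf : ∀ a b l, l ∈ φ (a ⊓ b) ↔ l ∈ φ a ∧ l ∈ φ b) :
    ∃ ξ : A → L, (∀ x y, ξ (x ⊔ y) = ξ x ⊔ ξ y) ∧ (∀ x y, ξ (x ⊓ y) = ξ x ⊓ ξ y) ∧
      ∀ x y : A, ξ x ∈ φ y ↔ x ≤ y := by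
  have hid : ∀ a, IsIdealSet L (φ a) := fun a => ⟨hne a, fun l l' => hlow a l l', fun l hl l' hl' =>
    ⟨l ⊔ l', hdir a l hl l' hl', le_sup_left, le_sup_right⟩⟩
  have hmono : ∀ a b, a ≤ b → φ a ⊆ φ b := by
    intro a b hab l hl
    rw [← inf_eq_left.2 hab, hinf] at hl
    exact hl.2
  have hle : ∀ a b, φ a = φ b → a ≤ b := by
    intro a b hab
    obtain ⟨l, hl, h⟩ := hsep a
    exact h b (hab ▸ hl)
  have hleast : ∀ a b, IsLeast {I : Set L | IsIdealSet L I ∧ φ a ∪ φ b ⊆ I} (φ (a ⊔ b)) := by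
    refine fun a b => ⟨⟨hid _, Set.union_subset (hmono _ _ le_sup_left) (hmono _ _ le_sup_right)⟩,
      ?_⟩
    rintro I ⟨hI, hsub⟩ l hl
    obtain ⟨g, hg, g', hg', hl⟩ := hjoin a b l hl
    obtain ⟨z, hz, hgz, hgz'⟩ := hI.2.2 g (hsub (Or.inl hg)) g' (hsub (Or.inr hg'))
    exact hI.2.1 l z (hl.trans (sup_le hgz hgz')) hz
  obtain ⟨ξ, -, h1, h2, h3⟩ := h L φ hid (fun a b hab => le_antisymm (hle a b hab)
    (hle b a hab.symm)) hleast (fun a b => Set.ext (hinf a b))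
  exact ⟨ξ, h1, h2, h3⟩

/-- Embed `A` into the ideals of the lattice of stairs by `a ↦ {f | all levels of f are below a}`;
joins are reached because all stairs are eventually trivial. -/
lemma SharpTransfer.condT_join {A : Type u} [Lattice A] [OrderBot A] [Fintype A]
    (h : SharpTransfer A) : CondT A := by
  classical
  obtain ⟨ξ, hsup, -, hξ⟩ := h.exists_embedding (L := Stair A)
    (fun a => {f | ∀ n, ∀ x ∈ f.lev n, x ≤ a})
    (fun a => ⟨Stair.step a 0, fun n x hx => hx.1⟩)
    (fun a f g hfg hg n x hx => hg n x (Stair.le_def.1 hfg n x hx))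
    (by
      rintro a f hf g hg n x (hx | hx | hx)
      · exact hf n x hx
      · exact hg n x hx
      · exact hx a (hf (n + 1)) (hg (n + 1)))
    (fun a => ⟨Stair.step a 0, fun n x hx => hx.1, fun b hb =>
      hb 0 a (Stair.mem_step.2 ⟨le_rfl, Or.inl le_rfl⟩)⟩)
    (by
      intro a b f hf
      obtain ⟨N, hN⟩ := f.fin
      refine ⟨Stair.step a N, fun n x hx => hx.1, Stair.step b N, fun n x hx => hx.1, ?_⟩
      intro n x hx
      by_cases hn : N ≤ n
      · rw [hN n hn x hx]
        exact Stair.bot_mem _ n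
      · refine Stair.mem_sup.2 (Or.inr (Or.inr fun u h1 h2 => (hf n x hx).trans (sup_le ?_ ?_)))
        · exact h1 a (Stair.mem_step.2 ⟨le_rfl, Or.inl (by omega)⟩)
        · exact h2 b (Stair.mem_step.2 ⟨le_rfl, Or.inl (by omega)⟩))
    (by
      intro a b f
      exact ⟨fun hf => ⟨fun n x hx => (hf n x hx).trans inf_le_left,
        fun n x hx => (hf n x hx).trans inf_le_right⟩,
        fun hf n x hx => le_inf (hf.1 n x hx) (hf.2 n x hx)⟩)
  refine Stair.condT_of_joinHom ξ hsup fun a b => ⟨?_, fun hba => ?_⟩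
  · rintro ⟨n, hn⟩
    exact (hξ a a).2 le_rfl n b hn
  · -- by finiteness some level of `ξ a` has an upper bound of all levels
    have : ∀ x, ∃ k : ℤ, ∀ n, x ∈ (ξ a).lev n → x ∈ (ξ a).lev k := by
      intro x
      by_cases hx : ∃ k, x ∈ (ξ a).lev k
      · obtain ⟨k, hk⟩ := hx
        exact ⟨k, fun _ _ => hk⟩
      · exact ⟨0, fun n hn => absurd ⟨n, hn⟩ hx⟩
    choose k hk using this
    have huniv : (Finset.univ : Finset A).Nonempty := ⟨⊥, Finset.mem_univ _⟩
    let N := Finset.univ.inf' huniv k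
    obtain ⟨c, hc, hcN⟩ := (ξ a).bound (N - 1)
    have hac : a ≤ c := (hξ a c).1 fun n x hx => hcN x <| by
      rw [sub_add_cancel]
      exact (ξ a).mem_of_le (Finset.inf'_le k (Finset.mem_univ x)) (hk x n hx)
    exact ⟨N - 1, (ξ a).lower _ b c (hba.trans hac) hc⟩

/-- Embed `A` into the filters of the lattice of stairs over the dual of `A`, by
`a ↦ {f | a occurs in f}`. -/
lemma SharpTransfer.condT_meet {A : Type u} [Lattice A] [OrderTop A] [Fintype A]
    (h : SharpTransfer A) : CondT Aᵒᵈ := by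
  obtain ⟨ξ, -, hinf, hξ⟩ := h.exists_embedding (L := (Stair Aᵒᵈ)ᵒᵈ)
    (fun a => {f | ∃ n, OrderDual.toDual a ∈ (OrderDual.ofDual f).lev n})
    (fun a => ⟨OrderDual.toDual (Stair.step (OrderDual.toDual a) 0), 0, le_rfl, Or.inl le_rfl⟩)
    (fun a f g hfg ⟨n, hn⟩ => ⟨n, (show OrderDual.ofDual g ≤ OrderDual.ofDual f from hfg) n hn⟩)
    (fun a f ⟨n, hn⟩ g ⟨m, hm⟩ => ⟨min n m, (OrderDual.ofDual f).mem_of_le (min_le_left n m) hn,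
      (OrderDual.ofDual g).mem_of_le (min_le_right n m) hm⟩)
    (fun a => ⟨OrderDual.toDual (Stair.step (OrderDual.toDual a) 0), ⟨0, le_rfl, Or.inl le_rfl⟩,
      fun b ⟨n, hn⟩ => hn.1⟩)
    (by
      rintro a b f ⟨n, hn⟩
      refine ⟨OrderDual.toDual (Stair.step (OrderDual.toDual a) n), ⟨n, le_rfl, Or.inl le_rfl⟩,
        OrderDual.toDual (Stair.step (OrderDual.toDual b) n), ⟨n, le_rfl, Or.inl le_rfl⟩, ?_⟩
      intro m x hx
      obtain ⟨⟨h1, h2⟩, h3, -⟩ := hx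
      rcases h2 with h2 | h2
      · exact (OrderDual.ofDual f).lower m x _ (le_inf h1 h3)
          ((OrderDual.ofDual f).mem_of_le h2 hn)
      · rw [h2]
        exact Stair.bot_mem _ m)
    (by
      intro a b f
      refine ⟨fun ⟨n, hn⟩ => ⟨⟨n, ?_⟩, ⟨n, ?_⟩⟩, fun ⟨⟨n, hn⟩, ⟨m, hm⟩⟩ => ?_⟩
      · exact (OrderDual.ofDual f).lower n _ _ (show a ⊓ b ≤ a from inf_le_left) hn
      · exact (OrderDual.ofDual f).lower n _ _ (show a ⊓ b ≤ b from inf_le_right) hn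
      · obtain ⟨c, hc, hcN⟩ := (OrderDual.ofDual f).bound (min n m - 1)
        rw [sub_add_cancel] at hcN
        refine ⟨min n m - 1, (OrderDual.ofDual f).lower _ _ c ?_ hc⟩
        exact sup_le (hcN _ ((OrderDual.ofDual f).mem_of_le (min_le_left n m) hn))
          (hcN _ ((OrderDual.ofDual f).mem_of_le (min_le_right n m) hm)))
  exact Stair.condT_of_joinHom (fun b => OrderDual.ofDual (ξ (OrderDual.ofDual b)))
    (fun a b => congrArg OrderDual.ofDual (hinf (OrderDual.ofDual a) (OrderDual.ofDual b)))
    (fun a b => hξ (OrderDual.ofDual a) (OrderDual.ofDual b))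

/-! ### Necessity of (W) -/

/-- In the presence of (T), a failure `x ∧ y ≤ u ∨ v` of (W) can be chosen with `u ∨ v ≤ x`:
if `(x, y)` is minimal for a failure with `b = u ∨ v`, then `(y ∨ b, x)` or `(x ∨ b, y)` is as wanted,
since otherwise minimality forces `x ∨ b = y ∨ b`, against semidistributivity. -/
lemma exists_good_failure {A : Type*} [Lattice A] [OrderBot A] [Fintype A]
    (hT : CondT A) (hW : ¬ WhitmanW A) :
    ∃ x y u v : A, x ⊓ y ≤ u ⊔ v ∧ u ⊔ v ≤ x ∧ ¬ x ≤ u ⊔ v ∧ ¬ y ≤ u ⊔ v ∧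
      ¬ x ⊓ y ≤ u ∧ ¬ x ⊓ y ≤ v := by
  classical
  obtain ⟨n, hn⟩ := hT.exists_rank
  simp only [WhitmanW, not_forall, not_or] at hW
  obtain ⟨x₀, y₀, u, v, h₀, hu₀, hv₀, hx₀, hy₀⟩ := hW
  let s : Finset (A × A) := Finset.univ.filter fun z => z.1 ⊓ z.2 ≤ u ⊔ v ∧ ¬ z.1 ≤ u ⊔ v ∧
    ¬ z.2 ≤ u ⊔ v ∧ ¬ z.1 ⊓ z.2 ≤ u ∧ ¬ z.1 ⊓ z.2 ≤ v
  have hs : ∀ x y, (x, y) ∈ s ↔ x ⊓ y ≤ u ⊔ v ∧ ¬ x ≤ u ⊔ v ∧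
      ¬ y ≤ u ⊔ v ∧ ¬ x ⊓ y ≤ u ∧ ¬ x ⊓ y ≤ v := by simp [s]
  obtain ⟨⟨x, y⟩, hxy⟩ := s.exists_minimal ⟨(x₀, y₀), (hs _ _).2 ⟨h₀, hx₀, hy₀, hu₀, hv₀⟩⟩
  obtain ⟨h, hx, hy, hu, hv⟩ := (hs x y).1 hxy.1
  by_contra hcon
  -- by minimality the meet of `x` with `y ⊔ (u ⊔ v)` cannot replace `x` unless it equals `x`
  have h1 : x ≤ y ⊔ (u ⊔ v) := by
    by_cases hb : x ⊓ (y ⊔ (u ⊔ v)) ≤ u ⊔ v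
    · refine absurd ⟨y ⊔ (u ⊔ v), x, u, v, inf_comm x _ ▸ hb, le_sup_right,
        fun h' => hy (le_sup_left.trans h'), hx, fun h' => hu ?_, fun h' => hv ?_⟩ hcon
      · exact (le_inf (inf_le_right.trans le_sup_left) inf_le_left).trans h'
      · exact (le_inf (inf_le_right.trans le_sup_left) inf_le_left).trans h'
    · have heq : x ⊓ (y ⊔ (u ⊔ v)) ⊓ y = x ⊓ y := by
        rw [inf_assoc, inf_eq_right.2 (le_sup_left : y ≤ y ⊔ (u ⊔ v))]
      have := hxy.2 ((hs (x ⊓ (y ⊔ (u ⊔ v))) y).2 ⟨heq ▸ h, hb, hy, heq ▸ hu, heq ▸ hv⟩)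
        ⟨inf_le_left, le_rfl⟩
      exact this.1.trans inf_le_right
  have h2 : y ≤ x ⊔ (u ⊔ v) := by
    by_cases hb : (x ⊔ (u ⊔ v)) ⊓ y ≤ u ⊔ v
    · refine absurd ⟨x ⊔ (u ⊔ v), y, u, v, hb, le_sup_right,
        fun h' => hx (le_sup_left.trans h'), hy, fun h' => hu ?_, fun h' => hv ?_⟩ hcon
      · exact (inf_le_inf_right y le_sup_left).trans h'
      · exact (inf_le_inf_right y le_sup_left).trans h'
    · have heq : x ⊓ ((x ⊔ (u ⊔ v)) ⊓ y) = x ⊓ y := by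
        rw [← inf_assoc, inf_eq_left.2 (le_sup_left : x ≤ x ⊔ (u ⊔ v))]
      have := hxy.2 ((hs x ((x ⊔ (u ⊔ v)) ⊓ y)).2 ⟨heq ▸ h, hx, hb, heq ▸ hu, heq ▸ hv⟩)
        ⟨le_rfl, inf_le_right⟩
      exact this.2.trans inf_le_left
  exact hx (le_of_sup_eq_of_rank hn
    (le_antisymm (sup_le h1 le_sup_right) (sup_le h2 le_sup_right)) h)

/-- Given `a`, `b`, `y` in `A`, a subset of `A × ℕ` (with its own order): elements `s` above `y` occur on
level `0` only (standing for level infinity); other elements occur on all even levels, and those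
in the interval `[a, b]` on the odd levels as well. -/
structure Tower (A : Type*) [Lattice A] (a b y : A) where
  /-- The projection to `A`. -/
  pt : A
  /-- The level. -/
  lvl : ℕ
  top : y ≤ pt → lvl = 0
  even : ¬ (a ≤ pt ∧ pt ≤ b) → lvl % 2 = 0

namespace Tower

variable {A : Type*} [Lattice A] {a b y : A}

open Classical in
/-- The element over `s` on the highest admissible level up to `k`. -/
noncomputable def mk' (a b y s : A) (k : ℕ) : Tower A a b y where
  pt := s
  lvl := if y ≤ s then 0 else if a ≤ s ∧ s ≤ b then k else 2 * (k / 2)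
  top h := by simp [h]
  even h := by split_ifs <;> omega

open Classical in
/-- An element outside `[a, b]` on the even level `k` reaches up to level `k + 1` as far as elements
below it are concerned. -/
noncomputable def hi (z : Tower A a b y) : ℕ := if a ≤ z.pt ∧ z.pt ≤ b then z.lvl else z.lvl + 1

@[ext]
lemma ext' {z w : Tower A a b y} (h1 : z.pt = w.pt) (h2 : z.lvl = w.lvl) : z = w := by
  cases z; cases w; cases h1; cases h2; rfl

instance : PartialOrder (Tower A a b y) where
  le z w := z.pt ≤ w.pt ∧ (y ≤ w.pt ∨ z.lvl ≤ w.hi)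
  le_refl z := ⟨le_rfl, Or.inr (by unfold hi; split_ifs <;> omega)⟩
  le_trans z w r := by
    rintro ⟨h1, h2⟩ ⟨h3, h4⟩
    refine ⟨h1.trans h3, ?_⟩
    by_cases hy : y ≤ r.pt
    · exact Or.inl hy
    replace h4 := h4.resolve_left hy
    replace h2 := h2.resolve_left fun h => hy (h.trans h3)
    refine Or.inr ?_
    have hz := z.even
    have hw := w.even
    have hr := r.even
    unfold hi at *
    by_cases hzC : a ≤ z.pt ∧ z.pt ≤ b
    · by_cases hwC : a ≤ w.pt ∧ w.pt ≤ b
      · simp only [hwC, and_self, if_true] at h2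
        omega
      · have hrC : ¬ (a ≤ r.pt ∧ r.pt ≤ b) := fun h => hwC ⟨hzC.1.trans h1, h3.trans h.2⟩
        simp only [hwC, hrC, if_false] at *
        have := hw not_false
        have := hr not_false
        omega
    · have := hz hzC
      by_cases hwC : a ≤ w.pt ∧ w.pt ≤ b
      · simp only [hwC, and_self, if_true] at h2
        omega
      · have := hw hwC
        simp only [hwC, if_false] at h2
        omega
  le_antisymm z w := by
    rintro ⟨h1, h2⟩ ⟨h3, h4⟩
    have hpt := le_antisymm h1 h3
    refine ext' hpt ?_
    by_cases hy : y ≤ z.pt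
    · rw [z.top hy, w.top (hpt ▸ hy)]
    have hz := z.even
    have hw := w.even
    unfold hi at *
    rw [← hpt] at h2 hw
    replace h2 := h2.resolve_left hy
    replace h4 := h4.resolve_left hy
    split_ifs at h2 h4 with hC
    · omega
    · have := hz hC
      have := hw hC
      omega

lemma le_def {z w : Tower A a b y} : z ≤ w ↔ z.pt ≤ w.pt ∧ (y ≤ w.pt ∨ z.lvl ≤ w.hi) := Iff.rfl

lemma lvl_mk'_le (s : A) (k : ℕ) : (mk' a b y s k).lvl ≤ k := by
  simp only [mk']
  split_ifs <;> omega

lemma le_hi_mk' {s : A} (hs : ¬ y ≤ s) (k : ℕ) : k ≤ (mk' a b y s k).hi := by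
  by_cases hC : a ≤ s ∧ s ≤ b
  · simp only [mk', hi, hs, hC, and_self, if_true, if_false, le_refl]
  · simp only [mk', hi, hs, hC, if_false]
    omega

open Classical in
/-- The level of a meet before rounding; elements above `y` impose no restriction. -/
noncomputable def infLvl (z w : Tower A a b y) : ℕ :=
  if y ≤ z.pt then w.hi else if y ≤ w.pt then z.hi else min z.hi w.hi

noncomputable instance : Lattice (Tower A a b y) where
  sup z w := mk' a b y (z.pt ⊔ w.pt) (max z.lvl w.lvl)
  inf z w := mk' a b y (z.pt ⊓ w.pt) (infLvl z w)
  le_sup_left z w := by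
    refine ⟨le_sup_left, or_iff_not_imp_left.2 fun h => ?_⟩
    exact (le_max_left _ _).trans (le_hi_mk' h _)
  le_sup_right z w := by
    refine ⟨le_sup_right, or_iff_not_imp_left.2 fun h => ?_⟩
    exact (le_max_right _ _).trans (le_hi_mk' h _)
  sup_le z w r h1 h2 := by
    refine ⟨sup_le h1.1 h2.1, or_iff_not_imp_left.2 fun h => ?_⟩
    exact (lvl_mk'_le _ _).trans (max_le (h1.2.resolve_left h) (h2.2.resolve_left h))
  inf_le_left z w := by
    refine ⟨inf_le_left, or_iff_not_imp_left.2 fun h => (lvl_mk'_le _ _).trans ?_⟩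
    simp only [infLvl, h, if_false]
    split_ifs
    exacts [le_rfl, min_le_left _ _]
  inf_le_right z w := by
    refine ⟨inf_le_right, or_iff_not_imp_left.2 fun h => (lvl_mk'_le _ _).trans ?_⟩
    simp only [infLvl, h, if_false]
    split_ifs
    exacts [le_rfl, min_le_right _ _]
  le_inf r z w h1 h2 := by
    refine ⟨le_inf h1.1 h2.1, or_iff_not_imp_left.2 fun h => le_trans ?_ (le_hi_mk' h _)⟩
    have h : ¬ y ≤ z.pt ⊓ w.pt := h
    have hz := h1.2
    have hw := h2.2
    unfold infLvl
    split_ifs with h3 h4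
    · exact hw.resolve_left fun h4 => h (le_inf h3 h4)
    · exact hz.resolve_left h3
    · exact le_min (hz.resolve_left h3) (hw.resolve_left h4)

lemma pt_sup (z w : Tower A a b y) : (z ⊔ w).pt = z.pt ⊔ w.pt := rfl

lemma lvl_sup (z w : Tower A a b y) :
    (z ⊔ w).lvl = (mk' a b y (z.pt ⊔ w.pt) (max z.lvl w.lvl)).lvl := rfl

lemma lvl_inf (z w : Tower A a b y) :
    (z ⊓ w).lvl = (mk' a b y (z.pt ⊓ w.pt) (infLvl z w)).lvl := rfl

end Tower

/-- For a failure `a = x ∧ y ≤ u ∨ v = b ≤ x` of (W), the tower has no sublattice projecting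
isomorphically onto `A`: if `x` is chosen on level `2m`, then `a` lands on level `2m + 1`, so `b`
lies between the levels `2m + 1` and `2m + 1`; but `b` is the join of `u` and `v`, which both sit
on even levels. -/
lemma SharpTransfer.whitmanW {A : Type u} [Lattice A] [OrderBot A] [Fintype A]
    (h : SharpTransfer A) : WhitmanW A := by
  by_contra hW
  obtain ⟨x, y, u, v, hab, hbx, hxb, hyb, hau, hav⟩ := exists_good_failure h.condT_join hW
  obtain ⟨ξ, hsup, hinf, hξ⟩ := h.exists_embedding (L := Tower A (x ⊓ y) (u ⊔ v) y)
    (fun s => {z | z.pt ≤ s})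
    (fun s => ⟨Tower.mk' _ _ _ s 0, le_refl s⟩)
    (fun s z w hzw hw => (Tower.le_def.1 hzw).1.trans hw)
    (fun s z hz w hw => sup_le (α := A) hz hw)
    (fun s => ⟨Tower.mk' _ _ _ s 0, le_refl s, fun t ht => ht⟩)
    (by
      intro s t z hz
      refine ⟨Tower.mk' _ _ _ s (2 * (z.lvl + 1)), le_refl s,
        Tower.mk' _ _ _ t (2 * (z.lvl + 1)), le_refl t, hz, or_iff_not_imp_left.2 fun hy => ?_⟩
      have hys : ¬ y ≤ s := fun h' => hy (h'.trans le_sup_left)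
      have hle : 2 * (z.lvl + 1) ≤ (Tower.mk' (x ⊓ y) (u ⊔ v) y s (2 * (z.lvl + 1))).lvl := by
        simp only [Tower.mk', hys, if_false]
        split_ifs <;> omega
      refine le_trans (le_trans ?_ (hle.trans (le_max_left _ _))) (Tower.le_hi_mk' hy _)
      omega)
    (fun s t z => le_inf_iff)
  have hpt : ∀ s, (ξ s).pt = s := fun s =>
    le_antisymm ((hξ s s).2 le_rfl) ((hξ s _).1 le_rfl)
  have hmono : ∀ s t, s ≤ t → ξ s ≤ ξ t := by
    intro s t hst
    have := hsup s t
    rw [sup_eq_right.2 hst] at this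
    rw [this]
    exact le_sup_left
  have hyx : ¬ y ≤ x := fun h' => hyb ((le_inf h' le_rfl).trans hab)
  have hya : ¬ y ≤ x ⊓ y := fun h' => hyb (h'.trans hab)
  have hx := (ξ x).even (by rw [hpt]; exact fun h' => hxb h'.2)
  have hu := (ξ u).even (by rw [hpt]; exact fun h' => hau h'.1)
  have hv := (ξ v).even (by rw [hpt]; exact fun h' => hav h'.1)
  have hhix : (ξ x).hi = (ξ x).lvl + 1 := by simp [Tower.hi, hpt, hxb]
  have hhib : (ξ (u ⊔ v)).hi = (ξ (u ⊔ v)).lvl := by simp [Tower.hi, hpt, hab]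
  have ha : (ξ (x ⊓ y)).lvl = (ξ x).lvl + 1 := by
    rw [hinf, Tower.lvl_inf]
    simp [Tower.mk', Tower.infLvl, hpt, hyx, hab, hhix]
  have hb : (ξ (u ⊔ v)).lvl = max (ξ u).lvl (ξ v).lvl := by
    rw [hsup, Tower.lvl_sup]
    simp [Tower.mk', hpt, hyb, hab]
  have h1 := (hmono _ _ hab).2.resolve_left (by rwa [hpt])
  have h2 := (hmono _ _ hbx).2.resolve_left (by rwa [hpt])
  omega

/-- A finite lattice `A` is sharply transferable (for every lattice `L` and every
lattice embedding `φ : A → Id L`—join of two ideals being the least ideal containing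
their union, meet being intersection—there exists a lattice embedding `ξ : A → L`
with `ξ x ∈ φ y ↔ x ≤ y`) if and only if `A` satisfies (T∨), (T∧), and (W). -/
theorem sharplyTransferable_iff_TjTmW (A : Type u) [Lattice A] [Fintype A] :
    (∀ (L : Type u) [Lattice L] (φ : A → Set L),
        (∀ x, IsIdealSet L (φ x)) →
        Function.Injective φ →
        (∀ x y : A, IsLeast {I : Set L | IsIdealSet L I ∧ φ x ∪ φ y ⊆ I} (φ (x ⊔ y))) →
        (∀ x y : A, φ (x ⊓ y) = φ x ∩ φ y) →
        ∃ ξ : A → L, Function.Injective ξ ∧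
          (∀ x y, ξ (x ⊔ y) = ξ x ⊔ ξ y) ∧ (∀ x y, ξ (x ⊓ y) = ξ x ⊓ ξ y) ∧
          ∀ x y : A, ξ x ∈ φ y ↔ x ≤ y) ↔
    (CondT A ∧ CondT Aᵒᵈ ∧ WhitmanW A) := by
  rcases isEmpty_or_nonempty A with hA | hA
  · refine ⟨fun _ => ⟨?_, ?_, fun x => isEmptyElim x⟩, ?_⟩
    · exact ⟨fun _ _ => True, fun _ _ => trivial, fun p => isEmptyElim p, fun _ _ _ _ _ _ _ _ =>
        trivial, fun _ _ _ _ => Or.inl trivial, fun _ _ _ _ _ => trivial⟩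
    · exact ⟨fun _ _ => True, fun _ _ => trivial, fun p => isEmptyElim (OrderDual.ofDual p),
        fun _ _ _ _ _ _ _ _ => trivial, fun _ _ _ _ => Or.inl trivial, fun _ _ _ _ _ => trivial⟩
    · exact fun _ L _ φ _ _ _ _ => ⟨fun x => isEmptyElim x, fun x => isEmptyElim x,
        fun x => isEmptyElim x, fun x => isEmptyElim x, fun x => isEmptyElim x⟩
  · let _ : BoundedOrder A := Fintype.toBoundedOrder A
    constructor
    · intro h
      have h : SharpTransfer A := h
      exact ⟨h.condT_join, h.condT_meet, h.whitmanW⟩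
    · rintro ⟨hTj, hTm, hW⟩ L _ φ hid hinj hsup hinf
      exact exists_sharp_embedding hTj hTm hW φ hid hinj hsup hinf
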